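/- Let G₁,…,G_n be nontrivial (at least two vertices) simple strongly connected digraphs, with G_i being d_i-regular, such that each G_i admits a bandwidth optimal shortest-path reduce-scatter schedule. Then the Cartesian product G₁□⋯□G_n (which is (d₁+⋯+d_n)-regular) admits a bandwidth optimal shortest-path reduce-scatter schedule. -/

import Mathlib

open MeasureTheory

namespace Collective

/-- A communication tuple `((w,C),(u,v),t)`. -/
abbrev Tup (V : Type*) := V × Set ℝ × (V × V) × ℕ

/-- A schedule is a set of communication tuples. -/
abbrev Sched (V : Type*) := Set (Tup V)

/-- The data shard, identified with the interval `[0,1)`. -/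
def shard : Set ℝ := Set.Ico (0 : ℝ) 1

/-- `A` is a valid (finite) schedule on the digraph with edge relation `E`:
every tuple uses an edge, its chunk is a measurable subset of the shard, and
its communication step is at least `1`. -/
def IsSched {V : Type*} (E : V → V → Prop) (A : Sched V) : Prop :=
  A.Finite ∧ ∀ p ∈ A, E p.2.2.1.1 p.2.2.1.2 ∧ p.2.1 ⊆ shard ∧
    MeasurableSet p.2.1 ∧ 1 ≤ p.2.2.2

/-- The maximum communication step occurring in a schedule. -/
noncomputable def tmax {V : Type*} (A : Sched V) : ℕ :=
  sSup {t | ∃ p ∈ A, p.2.2.2 = t}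

/-- `A` is a reduce-scatter schedule. -/
def IsReduceScatter {V : Type*} (A : Sched V) : Prop :=
  ∀ u v : V, u ≠ v → ∀ x ∈ shard,
    ∃ (m : ℕ) (w : Fin (m + 1) → V) (C : Fin m → Set ℝ) (t : Fin m → ℕ),
      w 0 = u ∧ w (Fin.last m) = v ∧ StrictMono t ∧
      ∀ i : Fin m, (v, C i, (w i.castSucc, w i.succ), t i) ∈ A ∧ x ∈ C i

/-- `A` is an allgather schedule. -/
def IsAllgather {V : Type*} (A : Sched V) : Prop :=
  ∀ u v : V, u ≠ v → ∀ x ∈ shard,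
    ∃ (m : ℕ) (w : Fin (m + 1) → V) (C : Fin m → Set ℝ) (t : Fin m → ℕ),
      w 0 = u ∧ w (Fin.last m) = v ∧ StrictMono t ∧
      ∀ i : Fin m, (u, C i, (w i.castSucc, w i.succ), t i) ∈ A ∧ x ∈ C i

/-- A digraph is `d`-regular if every vertex has out-degree `d` and in-degree `d`. -/
def IsRegular {V : Type*} (E : V → V → Prop) (d : ℕ) : Prop :=
  ∀ v : V, {w | E v w}.ncard = d ∧ {w | E w v}.ncard = d

/-- Node latency `T_L(A) = t_max · α`. -/
noncomputable def latT {V : Type*} (α : ℝ) (A : Sched V) : ℝ := (tmax A : ℝ) * α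

/-- Total chunk length sent over edge `e` at step `t`. -/
noncomputable def edgeLoad {V : Type*} (A : Sched V) (e : V × V) (t : ℕ) : ℝ :=
  ∑ᶠ p ∈ {p : Tup V | p ∈ A ∧ p.2.2.1 = e ∧ p.2.2.2 = t}, (volume p.2.1).toReal

/-- Bandwidth runtime of step `t`:
`T_B(A_t,M,B) = (d/B)·(M/N)·max_{(u,v)∈E} Σ_{((w,C),(u,v),t)∈A_t} |C|`. -/
noncomputable def stepT {V : Type*} (E : V → V → Prop) (d : ℕ) (M B : ℝ)
    (A : Sched V) (t : ℕ) : ℝ :=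
  ((d : ℝ) / B) * (M / (Nat.card V : ℝ)) *
    sSup ((fun e => edgeLoad A e t) '' {e : V × V | E e.1 e.2})

/-- Bandwidth runtime `T_B(A,M,B) = Σ_{t=1}^{t_max} T_B(A_t,M,B)`. -/
noncomputable def bwT {V : Type*} (E : V → V → Prop) (d : ℕ) (M B : ℝ)
    (A : Sched V) : ℝ :=
  ∑ t ∈ Finset.Icc 1 (tmax A), stepT E d M B A t

/-- There is a directed walk of length `n` from `u` to `v`. -/
def HasWalk {V : Type*} (E : V → V → Prop) (u v : V) (n : ℕ) : Prop :=
  ∃ w : Fin (n + 1) → V, w 0 = u ∧ w (Fin.last n) = v ∧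
    ∀ i : Fin n, E (w i.castSucc) (w i.succ)

/-- Strong connectivity. -/
def StronglyConnected {V : Type*} (E : V → V → Prop) : Prop :=
  ∀ u v : V, ∃ n, HasWalk E u v n

/-- Directed graph distance: the length of a shortest directed walk. -/
noncomputable def dist {V : Type*} (E : V → V → Prop) (u v : V) : ℕ :=
  sInf {n | HasWalk E u v n}

/-- Diameter `D(G) = max_{u,v} d(u,v)`. -/
noncomputable def diam {V : Type*} (E : V → V → Prop) : ℕ :=
  sSup {n | ∃ u v : V, dist E u v = n}

/-- `A` is a shortest-path (reduce-scatter style) schedule: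
`((v,C),(u,w),t) ∈ A` iff `d(u,v) = d(w,v)+1 = D(G)+1−t`. -/
def IsShortestPathSched {V : Type*} (E : V → V → Prop) (A : Sched V) : Prop :=
  (∀ (v : V) (C : Set ℝ) (u w : V) (t : ℕ), (v, C, (u, w), t) ∈ A →
      dist E u v = dist E w v + 1 ∧ dist E u v + t = diam E + 1) ∧
  (∀ (v u w : V) (t : ℕ), E u w → dist E u v = dist E w v + 1 →
      dist E u v + t = diam E + 1 → ∃ C : Set ℝ, (v, C, (u, w), t) ∈ A)

/-- The transpose digraph. -/
def transpose {V : Type*} (E : V → V → Prop) : V → V → Prop := fun u v => E v u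

/-- The reverse schedule `A^T`: `((w,C),(v,u),t_max−t+1) ∈ A^T` iff `((w,C),(u,v),t) ∈ A`. -/
noncomputable def reverseSched {V : Type*} (A : Sched V) : Sched V :=
  (fun q : Tup V => (q.1, q.2.1, (q.2.2.1.2, q.2.2.1.1), tmax A + 1 - q.2.2.2)) '' A

/-- The schedule obtained by relabeling vertices along `f`. -/
def mapSched {V : Type*} (f : V ≃ V) (A : Sched V) : Sched V :=
  (fun q : Tup V => (f q.1, q.2.1, (f q.2.2.1.1, f q.2.2.1.2), q.2.2.2)) '' A

/-- The vertex set of the line graph `L(G)`: the edges of `G`. -/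
def lineV {V : Type*} (E : V → V → Prop) : Type _ := {e : V × V // E e.1 e.2}

/-- The edge relation of the line graph: `uu' → vv'` iff `u' = v`. -/
def lineE {V : Type*} (E : V → V → Prop) : lineV E → lineV E → Prop :=
  fun e f => e.1.2 = f.1.1

/-- The line-graph-expanded schedule `A_{L(G)}`. -/
noncomputable def lineSched {V : Type*} (E : V → V → Prop) (A : Sched V) :
    Sched (lineV E) :=
  {p | (∃ (v v' w u u' : V) (C : Set ℝ) (t : ℕ)
          (hvv' : E v v') (hwu : E w u) (huu' : E u u'),
          (v, C, (u, u'), t) ∈ A ∧ (v, v') ≠ (w, u) ∧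
          p = (⟨(v, v'), hvv'⟩, C, (⟨(w, u), hwu⟩, ⟨(u, u'), huu'⟩), t))
     ∨ (∃ (u v v' : V) (huv : E u v) (hvv' : E v v'),
          (u, v) ≠ (v, v') ∧
          p = (⟨(v, v'), hvv'⟩, shard, (⟨(u, v), huv⟩, ⟨(v, v'), hvv'⟩), tmax A + 1))}

/-- A digraph bundled with a schedule, used to iterate line graph expansion. -/
structure Alg : Type 1 where
  V : Type
  E : V → V → Prop
  A : Sched V

/-- One application of line graph expansion to a bundled algorithm. -/
noncomputable def lineAlg (G : Alg) : Alg :=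
  ⟨lineV G.E, lineE G.E, lineSched G.E G.A⟩

/-- The degree-expanded digraph `G*n`. -/
def degE {V : Type*} (E : V → V → Prop) (n : ℕ) :
    (V × Fin n) → (V × Fin n) → Prop :=
  fun a b => E a.1 b.1

/-- The degree-expanded schedule `A_{G*n}`, relative to an enumeration `enum` of the
out-edges of each vertex of `G*n`. -/
noncomputable def degSched {V : Type*} (A : Sched V) (n d : ℕ)
    (enum : V × Fin n → Fin (n * d) → V × Fin n) : Sched (V × Fin n) :=
  {p | (∃ (u : V) (i j : Fin n) (β : Fin (n * d)), i ≠ j ∧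
          p = ((u, j),
               Set.Ico (((β : ℕ) : ℝ) / ((n : ℝ) * (d : ℝ)))
                 ((((β : ℕ) : ℝ) + 1) / ((n : ℝ) * (d : ℝ))),
               ((u, i), enum (u, i) β), 1))
     ∨ (∃ (w u v : V) (C : Set ℝ) (t : ℕ) (i j : Fin n),
          (w, C, (u, v), t) ∈ A ∧ p = ((w, j), C, ((u, i), (v, j)), t + 1))}

/-- The edge relation of the Cartesian power `G^{□n}`. -/
def powE {V : Type*} (E : V → V → Prop) (n : ℕ) :
    (Fin n → V) → (Fin n → V) → Prop :=
  fun u v => ∃ j : Fin n, E (u j) (v j) ∧ ∀ k : Fin n, k ≠ j → u k = v k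

/-- Cyclic rotation of coordinates by `i`. -/
def rot {V : Type*} {n : ℕ} (i : Fin n) (v : Fin n → V) : Fin n → V :=
  fun k => v (k - i)

/-- The Cartesian power allgather schedule `A_{G^{□n}}`: the `i`-th of the `n` schedules
`A^{(i)}` (a coordinate rotation of `A^{(1)}`) is run on the `i`-th equal subshard. -/
noncomputable def powSched {V : Type*} (A : Sched V) (n : ℕ) : Sched (Fin n → V) :=
  {p | ∃ (i j : Fin n) (w u v : V) (C : Set ℝ) (t : ℕ) (a b : Fin n → V),
        (w, C, (u, v), t) ∈ A ∧ a j = w ∧ b j = u ∧ (∀ k : Fin n, j < k → a k = b k) ∧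
        p = (rot i a, (fun x : ℝ => (((i : ℕ) : ℝ) + x) / (n : ℝ)) '' C,
             (rot i b, rot i (Function.update b j v)), t + (j : ℕ) * tmax A)}

/-- The edge relation of the Cartesian product `G₁□⋯□G_n` of a family of digraphs. -/
def boxE {n : ℕ} {V : Fin n → Type*} (E : ∀ i, V i → V i → Prop) :
    (∀ i, V i) → (∀ i, V i) → Prop :=
  fun u v => ∃ j : Fin n, E j (u j) (v j) ∧ ∀ k : Fin n, k ≠ j → u k = v k

/-- The generalized Kautz digraph `Π_{d,m}` on `ℤ/mℤ`:
`x → y` iff `y ≡ −d·x − a (mod m)` for some `a ∈ {1,…,d}`. -/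
def kautzE (d m : ℕ) : ZMod m → ZMod m → Prop :=
  fun x y => ∃ a : ℕ, 1 ≤ a ∧ a ≤ d ∧ y = -(d : ZMod m) * x - (a : ZMod m)

end Collective
namespace Collective

/-! In a shortest-path schedule, the shards leaving a vertex `u` at step `t` are exactly those of
the vertices at distance `D + 1 - t` from `u`, so the busiest of the `d` out-edges carries at least
`1 / d` of that sphere. Summing over `t` gives the bandwidth lower bound, and equality forces all
spheres of a given radius to have the same size and to be split evenly over the out-edges. Hence a
digraph admits an optimal schedule iff it has a *balanced* fractional shortest-path routing; in the
converse direction the shard is cut into intervals whose lengths are the prescribed fractions.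

Balanced routings of two digraphs combine to one of their product: of a shard at distances `(a, b)`
in the two factors, let a fraction `L a b` take its next hop in the first factor. The total over
`a + b = s` must be the share `d₁ / (d₁ + d₂)`. Moving in the first factor only when `b = 0` sends
too little and moving there whenever `a ≠ 0` sends too much, because sphere sizes grow by at most a
factor of the degree from one radius to the next; some convex combination is therefore exact. -/

open Finset

section Walks

variable {V W : Type*} {E : V → V → Prop} {F : W → W → Prop} {u v w : V}

lemma hasWalk_zero : HasWalk E u v 0 ↔ u = v :=
  ⟨fun ⟨_, h₀, h₁, _⟩ => h₀.symm.trans h₁, fun h => ⟨fun _ => u, rfl, h, fun i => i.elim0⟩⟩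

lemma hasWalk_succ {n : ℕ} : HasWalk E u v (n + 1) ↔ ∃ w, E u w ∧ HasWalk E w v n := by
  constructor
  · rintro ⟨p, rfl, rfl, hp⟩
    exact ⟨p 1, hp 0, fun i => p i.succ, rfl, rfl, fun i => hp i.succ⟩
  · rintro ⟨w, huw, p, rfl, rfl, hp⟩
    exact ⟨Fin.cons u p, rfl, rfl, Fin.cases huw hp⟩

lemma HasWalk.trans {m n : ℕ} (h₁ : HasWalk E u v m) (h₂ : HasWalk E v w n) :
    HasWalk E u w (m + n) := by
  induction m generalizing u with
  | zero => rwa [hasWalk_zero.1 h₁, Nat.zero_add]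
  | succ m ih =>
    obtain ⟨x, hux, hxv⟩ := hasWalk_succ.1 h₁
    rw [Nat.add_right_comm]
    exact hasWalk_succ.2 ⟨x, hux, ih hxv⟩

lemma HasWalk.map {n : ℕ} (f : E →r F) (h : HasWalk E u v n) : HasWalk F (f u) (f v) n := by
  obtain ⟨p, rfl, rfl, hp⟩ := h
  exact ⟨f ∘ p, rfl, rfl, fun i => f.map_rel (hp i)⟩

lemma hasWalk_relIso (e : E ≃r F) {n : ℕ} : HasWalk F (e u) (e v) n ↔ HasWalk E u v n :=
  ⟨fun h => by simpa using h.map e.symm.toRelEmbedding.toRelHom,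
    fun h => h.map e.toRelEmbedding.toRelHom⟩

lemma dist_le {n : ℕ} (h : HasWalk E u v n) : dist E u v ≤ n :=
  Nat.sInf_le h

lemma StronglyConnected.hasWalk_dist (hsc : StronglyConnected E) (u v : V) :
    HasWalk E u v (dist E u v) :=
  Nat.sInf_mem (hsc u v)

@[simp] lemma dist_self (u : V) : dist E u u = 0 :=
  Nat.le_zero.1 (dist_le (hasWalk_zero.2 rfl))

lemma StronglyConnected.dist_eq_zero (hsc : StronglyConnected E) : dist E u v = 0 ↔ u = v :=
  ⟨fun h => hasWalk_zero.1 (h ▸ hsc.hasWalk_dist u v), fun h => h ▸ dist_self u⟩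

lemma StronglyConnected.dist_le_succ (hsc : StronglyConnected E) (v : V) (h : E u w) :
    dist E u v ≤ dist E w v + 1 :=
  dist_le (hasWalk_succ.2 ⟨w, h, hsc.hasWalk_dist w v⟩)

lemma StronglyConnected.exists_dist_eq_succ (hsc : StronglyConnected E) (h : u ≠ v) :
    ∃ w, E u w ∧ dist E u v = dist E w v + 1 := by
  obtain ⟨n, hn⟩ := Nat.exists_eq_succ_of_ne_zero (mt hsc.dist_eq_zero.1 h)
  obtain ⟨w, huw, hwv⟩ := hasWalk_succ.1 (hn ▸ hsc.hasWalk_dist u v)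
  have := dist_le hwv
  have := hsc.dist_le_succ v huw
  exact ⟨w, huw, by omega⟩

lemma ne_of_dist_eq_succ (h : dist E u v = dist E w v + 1) : u ≠ v := by
  rintro rfl
  simp at h

lemma StronglyConnected.dist_eq_one (hsc : StronglyConnected E) :
    dist E u v = 1 ↔ E u v ∧ u ≠ v := by
  constructor
  · intro h
    have huv : u ≠ v := by rintro rfl; simp at h
    obtain ⟨w, huw, hw⟩ := hsc.exists_dist_eq_succ huv
    have hwv : w = v := hsc.dist_eq_zero.1 (by omega)
    exact ⟨hwv ▸ huw, huv⟩
  · rintro ⟨h, huv⟩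
    have := hsc.dist_le_succ v h
    have := mt hsc.dist_eq_zero.1 huv
    rw [dist_self] at *
    omega

lemma dist_relIso (e : E ≃r F) (u v : V) : dist F (e u) (e v) = dist E u v := by
  simp only [dist, hasWalk_relIso]

lemma StronglyConnected.relIso (hsc : StronglyConnected E) (e : E ≃r F) :
    StronglyConnected F :=
  e.surjective.forall₂.2 fun u v => (hsc u v).imp fun _ => (hasWalk_relIso e).2

lemma dist_le_diam [Finite V] (u v : V) : dist E u v ≤ diam E :=
  le_csSup ((Set.finite_range fun p : V × V => dist E p.1 p.2).subset
    (by rintro _ ⟨u, v, rfl⟩; exact ⟨(u, v), rfl⟩)).bddAbove ⟨u, v, rfl⟩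

lemma StronglyConnected.exists_adj_of_diam_pos (hsc : StronglyConnected E) (h : 0 < diam E) :
    ∃ u w, E u w ∧ u ≠ w := by
  obtain ⟨_, ⟨u, v, rfl⟩, huv⟩ := exists_lt_of_lt_csSup' h
  have hne : u ≠ v := by rintro rfl; simp at huv
  obtain ⟨w, huw, hw⟩ := hsc.exists_dist_eq_succ hne
  exact ⟨u, w, huw, by rintro rfl; omega⟩

lemma IsRegular.relIso {d : ℕ} (h : IsRegular E d) (e : E ≃r F) : IsRegular F d :=
  e.surjective.forall.2 fun v => by
    have hout : {w | F (e v) w} = e '' {w | E v w} := by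
      ext w; obtain ⟨w, rfl⟩ := e.surjective w; simp [e.map_rel_iff]
    have hin : {w | F w (e v)} = e '' {w | E w v} := by
      ext w; obtain ⟨w, rfl⟩ := e.surjective w; simp [e.map_rel_iff]
    rw [hout, hin, Set.ncard_image_of_injective _ e.injective,
      Set.ncard_image_of_injective _ e.injective]
    exact h v

lemma IsRegular.pos [Finite V] {d : ℕ} (h : IsRegular E d) (huw : E u w) : 0 < d :=
  (h u).1 ▸ (Set.ncard_pos (Set.toFinite _)).2 ⟨w, huw⟩

end Walks

section Spheres

variable {V W : Type*} [Fintype V] [Fintype W] {E : V → V → Prop} {F : W → W → Prop} {u v w : V}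

/-- The out-neighbours of `u`, as a finset. -/
noncomputable def outNeighbors (E : V → V → Prop) (u : V) : Finset V :=
  {w | E u w}.toFinite.toFinset

@[simp] lemma mem_outNeighbors : w ∈ outNeighbors E u ↔ E u w := by
  simp [outNeighbors]

lemma IsRegular.card_outNeighbors {d : ℕ} (h : IsRegular E d) (u : V) :
    #(outNeighbors E u) = d := by
  rw [← (h u).1, outNeighbors, Set.ncard_eq_toFinset_card]

/-- The sphere of radius `s` about `u`: the vertices at distance `s` *from* `u`. -/
noncomputable def sphere (E : V → V → Prop) (u : V) (s : ℕ) : Finset V := {v | dist E u v = s}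

@[simp] lemma mem_sphere {s : ℕ} : v ∈ sphere E u s ↔ dist E u v = s := by
  simp [sphere]

lemma StronglyConnected.sphere_zero (hsc : StronglyConnected E) (u : V) : sphere E u 0 = {u} := by
  ext v
  rw [mem_sphere, hsc.dist_eq_zero, mem_singleton, eq_comm]

lemma StronglyConnected.sphere_one (hsc : StronglyConnected E) (hirr : ∀ v, ¬E v v) (u : V) :
    sphere E u 1 = outNeighbors E u := by
  ext v
  rw [mem_sphere, hsc.dist_eq_one, mem_outNeighbors, and_iff_left_of_imp]
  rintro h rfl
  exact hirr u h

lemma sphere_eq_empty {s : ℕ} (hs : diam E < s) (u : V) : sphere E u s = ∅ := by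
  refine eq_empty_of_forall_notMem fun v hv => ?_
  have := dist_le_diam (E := E) u v
  rw [mem_sphere] at hv
  omega

lemma StronglyConnected.sum_card_sphere (hsc : StronglyConnected E) (u : V) :
    ∑ t ∈ Icc 1 (diam E), #(sphere E u (diam E + 1 - t)) = Fintype.card V - 1 := by
  classical
  have hne (v : V) : v ≠ u ↔ dist E u v ≠ 0 := by rw [Ne, Ne, hsc.dist_eq_zero, eq_comm]
  rw [← card_univ, ← card_erase_of_mem (mem_univ u),
    card_eq_sum_card_fiberwise (f := fun v => diam E + 1 - dist E u v) (t := Icc 1 (diam E))]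
  · refine sum_congr rfl fun t ht => congrArg card ?_
    rw [mem_Icc] at ht
    ext v
    have := dist_le_diam (E := E) u v
    rw [mem_sphere, mem_filter, mem_erase, hne, and_iff_left (mem_univ v)]
    omega
  · intro v hv
    have := dist_le_diam (E := E) u v
    rw [mem_coe, mem_erase, hne] at hv
    simp only [coe_Icc, Set.mem_Icc]
    omega

lemma sphere_relIso (e : E ≃r F) (u : V) (s : ℕ) :
    sphere F (e u) s = (sphere E u s).map e.toEquiv.toEmbedding := by
  ext v
  obtain ⟨v, rfl⟩ := e.surjective v
  rw [mem_sphere, dist_relIso, ← mem_sphere]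
  exact (mem_map' e.toEquiv.toEmbedding).symm

end Spheres

section Routings

variable {V W : Type*} [Fintype V] [Fintype W] {E : V → V → Prop} {F : W → W → Prop}
  {d : ℕ} {N : ℕ → ℕ} {f : V → V → V → ℝ} {u v w : V}

/-- A fractional shortest-path routing: `f u v w` is the fraction of the shard destined for `v`
that `u` forwards to its out-neighbour `w`. -/
structure IsRouting (E : V → V → Prop) (f : V → V → V → ℝ) : Prop where
  nonneg : ∀ u v w, 0 ≤ f u v w
  support : ∀ {u v w}, f u v w ≠ 0 → E u w ∧ dist E u v = dist E w v + 1
  sum_eq_one : ∀ {u v}, u ≠ v → ∑ w, f u v w = 1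

/-- A routing is balanced if the `N s` shards travelling from a vertex to the vertices at distance
`s ≥ 1` are spread evenly over its `d` out-edges; here `N s` must not depend on the vertex. -/
structure IsBalancedRouting (E : V → V → Prop) (d : ℕ) (N : ℕ → ℕ) (f : V → V → V → ℝ) : Prop
    extends IsRouting E f where
  card_sphere : ∀ u s, #(sphere E u s) = N s
  load_eq : ∀ {u w s}, E u w → 1 ≤ s → d * ∑ v ∈ sphere E u s, f u v w = (N s : ℝ)

/-- The growth condition satisfied by the sphere sizes of a `d`-regular digraph with a balanced
routing. -/
structure IsSphereGrowth (d : ℕ) (N : ℕ → ℕ) : Prop where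
  zero : N 0 = 1
  one : N 1 = d
  succ_le : ∀ s, N (s + 1) ≤ d * N s

/-- A simple strongly connected `d`-regular digraph with a balanced shortest-path routing. -/
structure IsBalanced (E : V → V → Prop) (d : ℕ) : Prop where
  irrefl : ∀ v, ¬E v v
  stronglyConnected : StronglyConnected E
  isRegular : IsRegular E d
  exists_routing : ∃ N f, IsBalancedRouting E d N f

lemma IsRouting.apply_self (hf : IsRouting E f) (u w : V) : f u u w = 0 := by
  by_contra h
  exact ne_of_dist_eq_succ (hf.support h).2 rfl

lemma IsRouting.le_one (hf : IsRouting E f) (u v w : V) : f u v w ≤ 1 := by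
  obtain rfl | huv := eq_or_ne u v
  · simp [hf.apply_self]
  · exact (single_le_sum (fun w _ => hf.nonneg u v w) (mem_univ w)).trans_eq (hf.sum_eq_one huv)

lemma IsRouting.relIso (hf : IsRouting E f) (e : E ≃r F) :
    IsRouting F fun u v w => f (e.symm u) (e.symm v) (e.symm w) where
  nonneg _ _ _ := hf.nonneg _ _ _
  support h := by
    rw [← dist_relIso e.symm, ← dist_relIso e.symm, ← e.symm.map_rel_iff]
    exact hf.support h
  sum_eq_one h := by
    rw [← hf.sum_eq_one (e.symm.injective.ne h)]
    exact e.symm.toEquiv.sum_comp _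

lemma IsBalancedRouting.relIso (hf : IsBalancedRouting E d N f) (e : E ≃r F) :
    IsBalancedRouting F d N fun u v w => f (e.symm u) (e.symm v) (e.symm w) where
  toIsRouting := hf.toIsRouting.relIso e
  card_sphere := e.surjective.forall.2 fun u s => by
    rw [sphere_relIso, card_map, hf.card_sphere]
  load_eq {u w s} h hs := by
    obtain ⟨u, rfl⟩ := e.surjective u
    obtain ⟨w, rfl⟩ := e.surjective w
    rw [← hf.load_eq (e.map_rel_iff.1 h) hs, sphere_relIso, sum_map]
    simp

lemma IsBalanced.relIso (h : IsBalanced E d) (e : E ≃r F) : IsBalanced F d where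
  irrefl := e.surjective.forall.2 fun v => mt e.map_rel_iff.1 (h.irrefl v)
  stronglyConnected := h.stronglyConnected.relIso e
  isRegular := h.isRegular.relIso e
  exists_routing :=
    let ⟨_, _, hf⟩ := h.exists_routing
    ⟨_, _, hf.relIso e⟩

lemma IsRouting.sum_sphere_succ_le (hf : IsRouting E f) (u w : V) (s : ℕ) :
    ∑ v ∈ sphere E u (s + 1), f u v w ≤ #(sphere E w s) := by
  rw [← sum_filter_ne_zero]
  calc ∑ v ∈ sphere E u (s + 1) with f u v w ≠ 0, f u v w
      ≤ #{v ∈ sphere E u (s + 1) | f u v w ≠ 0} := by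
        simpa using sum_le_card_nsmul _ _ 1 fun v _ => hf.le_one u v w
    _ ≤ #(sphere E w s) := by
        refine Nat.cast_le.2 (card_le_card fun v hv => ?_)
        rw [mem_filter, mem_sphere] at hv
        have := (hf.support hv.2).2
        rw [mem_sphere]
        omega

lemma IsBalancedRouting.isSphereGrowth [Nonempty V] (hf : IsBalancedRouting E d N f)
    (hirr : ∀ v, ¬E v v) (hsc : StronglyConnected E) (hreg : IsRegular E d) :
    IsSphereGrowth d N := by
  obtain ⟨u⟩ := ‹Nonempty V›
  refine ⟨?_, ?_, fun s => ?_⟩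
  · rw [← hf.card_sphere u, hsc.sphere_zero, card_singleton]
  · rw [← hf.card_sphere u, hsc.sphere_one hirr, hreg.card_outNeighbors]
  · by_cases hN : N (s + 1) = 0
    · simp [hN]
    obtain ⟨v, hv⟩ := card_ne_zero.1 ((hf.card_sphere u (s + 1)).trans_ne hN)
    have huv : u ≠ v := by rintro rfl; simp at hv
    obtain ⟨w, huw, -⟩ := hsc.exists_dist_eq_succ huv
    rw [← Nat.cast_le (α := ℝ), Nat.cast_mul, ← hf.load_eq huw (Nat.le_add_left 1 s),
      ← hf.card_sphere w s]
    gcongr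
    exact hf.sum_sphere_succ_le u w s

end Routings

section Splits

variable {d₁ d₂ : ℕ} {N₁ N₂ : ℕ → ℕ} {L : ℕ → ℕ → ℝ}

/-- A balanced split for a product of digraphs of degrees `d₁`, `d₂` and sphere sizes `N₁`, `N₂`:
of a shard at distances `a` and `b` in the two factors, the fraction `L a b` takes its next hop in
the first factor. For each total distance `s ≥ 1`, the first factor has to carry the share
`d₁ / (d₁ + d₂)` of the traffic. -/
structure IsBalancedSplit (d₁ d₂ : ℕ) (N₁ N₂ : ℕ → ℕ) (L : ℕ → ℕ → ℝ) : Prop where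
  nonneg : ∀ a b, 0 ≤ L a b
  le_one : ∀ a b, L a b ≤ 1
  zero_left : ∀ {b}, b ≠ 0 → L 0 b = 0
  zero_right : ∀ {a}, a ≠ 0 → L a 0 = 1
  sum_eq : ∀ {s}, s ≠ 0 → (d₁ + d₂) * ∑ p ∈ antidiagonal s, L p.1 p.2 * (N₁ p.1 * N₂ p.2) =
    d₁ * ∑ p ∈ antidiagonal s, (N₁ p.1 * N₂ p.2 : ℝ)

lemma IsBalancedSplit.swap (hL : IsBalancedSplit d₁ d₂ N₁ N₂ L) :
    IsBalancedSplit d₂ d₁ N₂ N₁ fun a b => 1 - L b a where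
  nonneg a b := sub_nonneg.2 (hL.le_one b a)
  le_one a b := sub_le_self 1 (hL.nonneg b a)
  zero_left hb := by rw [hL.zero_right hb, sub_self]
  zero_right ha := by rw [hL.zero_left ha, sub_zero]
  sum_eq {s} hs := by
    rw [← Nat.sum_antidiagonal_swap,
      ← Nat.sum_antidiagonal_swap (f := fun p => (N₂ p.1 * N₁ p.2 : ℝ))]
    simp only [Prod.fst_swap, Prod.snd_swap, sub_mul, one_mul, sum_sub_distrib,
      mul_comm (N₂ _ : ℝ)]
    linear_combination -(hL.sum_eq hs)

lemma IsBalancedSplit.sum_mul_left (hL : IsBalancedSplit d₁ d₂ N₁ N₂ L) (hd : d₁ ≠ 0)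
    {x : ℕ → ℝ} (hx : ∀ a, a ≠ 0 → d₁ * x a = N₁ a) {s : ℕ} (hs : s ≠ 0) :
    (d₁ + d₂) * ∑ p ∈ antidiagonal s, L p.1 p.2 * (x p.1 * N₂ p.2) =
      ∑ p ∈ antidiagonal s, (N₁ p.1 * N₂ p.2 : ℝ) := by
  refine mul_left_cancel₀ (Nat.cast_ne_zero.2 hd : (d₁ : ℝ) ≠ 0) ?_
  rw [← hL.sum_eq hs, mul_left_comm, mul_sum]
  congr 1
  refine sum_congr rfl fun ⟨a, b⟩ hab => ?_
  obtain rfl | ha := eq_or_ne a 0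
  · rw [hL.zero_left (by simp_all)]
    ring
  · rw [← hx a ha]
    ring

lemma IsBalancedSplit.sum_mul_right (hL : IsBalancedSplit d₁ d₂ N₁ N₂ L) (hd : d₂ ≠ 0)
    {y : ℕ → ℝ} (hy : ∀ b, b ≠ 0 → d₂ * y b = N₂ b) {s : ℕ} (hs : s ≠ 0) :
    (d₁ + d₂) * ∑ p ∈ antidiagonal s, (1 - L p.1 p.2) * (N₁ p.1 * y p.2) =
      ∑ p ∈ antidiagonal s, (N₁ p.1 * N₂ p.2 : ℝ) := by
  have h := hL.swap.sum_mul_left hd hy hs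
  rw [← Nat.sum_antidiagonal_swap,
    ← Nat.sum_antidiagonal_swap (f := fun p => (N₂ p.1 * N₁ p.2 : ℝ))] at h
  simpa only [Prod.fst_swap, Prod.snd_swap, mul_comm (N₁ _ : ℝ), add_comm (d₂ : ℝ)] using h

/-- Routing the first factor last (`L a b = 0` unless `b = 0`) puts at most its share on it. -/
lemma IsSphereGrowth.add_mul_le_mul_sum_antidiagonal (h₁ : IsSphereGrowth d₁ N₁)
    (h₂ : IsSphereGrowth d₂ N₂) (s : ℕ) :
    (d₁ + d₂) * N₁ (s + 1) ≤ d₁ * ∑ p ∈ antidiagonal (s + 1), N₁ p.1 * N₂ p.2 := by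
  have hsub : N₁ s * N₂ 1 ≤ ∑ p ∈ antidiagonal s, N₁ p.1 * N₂ (p.2 + 1) :=
    single_le_sum (f := fun p : ℕ × ℕ => N₁ p.1 * N₂ (p.2 + 1)) (a := (s, 0))
      (fun _ _ => Nat.zero_le _) (HasAntidiagonal.mem_antidiagonal.2 (Nat.add_zero s))
  rw [h₂.one] at hsub
  rw [Nat.sum_antidiagonal_succ', h₂.zero]
  calc (d₁ + d₂) * N₁ (s + 1) = d₁ * N₁ (s + 1) + d₂ * N₁ (s + 1) := add_mul ..
    _ ≤ d₁ * N₁ (s + 1) + d₂ * (d₁ * N₁ s) := by gcongr; exact h₁.succ_le s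
    _ = d₁ * (N₁ (s + 1) * 1 + N₁ s * d₂) := by ring
    _ ≤ _ := by gcongr

lemma IsSphereGrowth.exists_convex_weights (h₁ : IsSphereGrowth d₁ N₁) (h₂ : IsSphereGrowth d₂ N₂)
    (s : ℕ) : ∃ α β : ℝ, 0 ≤ α ∧ 0 ≤ β ∧ α + β = 1 ∧
      α * ((d₁ + d₂) * N₁ (s + 1)) +
        β * ((d₁ + d₂) * (∑ p ∈ antidiagonal (s + 1), (N₁ p.1 * N₂ p.2 : ℝ) - N₂ (s + 1))) =
      d₁ * ∑ p ∈ antidiagonal (s + 1), (N₁ p.1 * N₂ p.2 : ℝ) := by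
  have hle₁ : ((d₁ + d₂) * N₁ (s + 1) : ℝ) ≤
      d₁ * ∑ p ∈ antidiagonal (s + 1), (N₁ p.1 * N₂ p.2 : ℝ) :=
    mod_cast h₁.add_mul_le_mul_sum_antidiagonal h₂ s
  have hle₂ : ((d₂ + d₁) * N₂ (s + 1) : ℝ) ≤
      d₂ * ∑ p ∈ antidiagonal (s + 1), (N₁ p.1 * N₂ p.2 : ℝ) := by
    rw [← Nat.sum_antidiagonal_swap]
    simp only [Prod.fst_swap, Prod.snd_swap, mul_comm (N₁ _ : ℝ)]
    exact_mod_cast h₂.add_mul_le_mul_sum_antidiagonal h₁ s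
  have hmem := Set.mem_Icc.2 ⟨hle₁, (by linarith :
    d₁ * ∑ p ∈ antidiagonal (s + 1), (N₁ p.1 * N₂ p.2 : ℝ) ≤
      (d₁ + d₂) * (∑ p ∈ antidiagonal (s + 1), (N₁ p.1 * N₂ p.2 : ℝ) - N₂ (s + 1)))⟩
  rwa [← segment_eq_Icc (hmem.1.trans hmem.2)] at hmem

lemma IsSphereGrowth.exists_isBalancedSplit (h₁ : IsSphereGrowth d₁ N₁)
    (h₂ : IsSphereGrowth d₂ N₂) : ∃ L, IsBalancedSplit d₁ d₂ N₁ N₂ L := by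
  choose α β hα hβ hαβ hsum using h₁.exists_convex_weights h₂
  -- Interpolate between routing the first factor last (`b = 0`) and first (`a ≠ 0`).
  refine ⟨fun a b => α (a + b - 1) * (if b = 0 then 1 else 0) +
    β (a + b - 1) * (if a = 0 then 0 else 1), ⟨fun a b => ?_, fun a b => ?_, fun {b} hb => ?_,
      fun {a} ha => ?_, fun {s} hs => ?_⟩⟩
  · have := hα (a + b - 1); have := hβ (a + b - 1)
    positivity
  · rw [← hαβ (a + b - 1)]
    have := hα (a + b - 1); have := hβ (a + b - 1)
    gcongr <;> split_ifs <;> simp [*]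
  · simp [hb]
  · simp [ha, hαβ]
  · obtain ⟨s, rfl⟩ := Nat.exists_eq_succ_of_ne_zero hs
    rw [← hsum]
    have hlast : ∑ p ∈ antidiagonal (s + 1), (if p.2 = 0 then 1 else 0) * (N₁ p.1 * N₂ p.2 : ℝ) =
        N₁ (s + 1) := by
      simp [Nat.sum_antidiagonal_succ', h₂.zero]
    have hfirst : ∑ p ∈ antidiagonal (s + 1), (if p.1 = 0 then 0 else 1) * (N₁ p.1 * N₂ p.2 : ℝ) =
        ∑ p ∈ antidiagonal (s + 1), (N₁ p.1 * N₂ p.2 : ℝ) - N₂ (s + 1) := by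
      simp [Nat.sum_antidiagonal_succ, h₁.zero]
    rw [← hlast, ← hfirst, mul_left_comm, mul_left_comm (β s), ← mul_add]
    congr 1
    rw [mul_sum, mul_sum, ← sum_add_distrib]
    refine sum_congr rfl fun p hp => ?_
    rw [HasAntidiagonal.mem_antidiagonal.1 hp, Nat.add_sub_cancel]
    ring

end Splits

section Product

variable {V W : Type*} {E : V → V → Prop} {F : W → W → Prop}

/-- The edge relation of the Cartesian product of two digraphs. -/
def prodE (E : V → V → Prop) (F : W → W → Prop) : V × W → V × W → Prop :=
  fun u w => (E u.1 w.1 ∧ u.2 = w.2) ∨ (u.1 = w.1 ∧ F u.2 w.2)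

lemma hasWalk_prodE {u v : V × W} {n : ℕ} :
    HasWalk (prodE E F) u v n ↔
      ∃ k l, k + l = n ∧ HasWalk E u.1 v.1 k ∧ HasWalk F u.2 v.2 l := by
  constructor
  · intro h
    induction n generalizing u with
    | zero => exact ⟨0, 0, rfl, by simp [hasWalk_zero, hasWalk_zero.1 h]⟩
    | succ n ih =>
      obtain ⟨w, huw, hwv⟩ := hasWalk_succ.1 h
      obtain ⟨k, l, rfl, hk, hl⟩ := ih hwv
      obtain ⟨h₁, h₂⟩ | ⟨h₁, h₂⟩ := huw
      · exact ⟨k + 1, l, by omega, hasWalk_succ.2 ⟨_, h₁, hk⟩, h₂ ▸ hl⟩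
      · exact ⟨k, l + 1, by omega, h₁ ▸ hk, hasWalk_succ.2 ⟨_, h₂, hl⟩⟩
  · rintro ⟨k, l, rfl, hk, hl⟩
    let inl : E →r prodE E F := ⟨fun x => (x, u.2), fun h => Or.inl ⟨h, rfl⟩⟩
    let inr : F →r prodE E F := ⟨fun y => (v.1, y), fun h => Or.inr ⟨rfl, h⟩⟩
    exact (hk.map inl).trans (hl.map inr)

lemma StronglyConnected.prodE (hE : StronglyConnected E) (hF : StronglyConnected F) :
    StronglyConnected (prodE E F) := fun u v =>
  ⟨_, hasWalk_prodE.2 ⟨_, _, rfl, hE.hasWalk_dist u.1 v.1, hF.hasWalk_dist u.2 v.2⟩⟩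

lemma dist_prodE (hE : StronglyConnected E) (hF : StronglyConnected F) (u v : V × W) :
    dist (prodE E F) u v = dist E u.1 v.1 + dist F u.2 v.2 := by
  refine le_antisymm (dist_le ?_) ?_
  · exact hasWalk_prodE.2 ⟨_, _, rfl, hE.hasWalk_dist _ _, hF.hasWalk_dist _ _⟩
  · obtain ⟨k, l, hkl, hk, hl⟩ := hasWalk_prodE.1 ((hE.prodE hF).hasWalk_dist u v)
    exact hkl ▸ add_le_add (dist_le hk) (dist_le hl)

lemma transpose_prodE : transpose (prodE E F) = prodE (transpose E) (transpose F) := by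
  ext u v
  simp only [transpose, prodE, eq_comm]

lemma ncard_prodE [Finite V] [Finite W] (hirr : ∀ v, ¬E v v) (u : V × W) :
    {w | prodE E F u w}.ncard = {x | E u.1 x}.ncard + {y | F u.2 y}.ncard := by
  have hunion : {w | prodE E F u w} = {x | E u.1 x} ×ˢ {u.2} ∪ {u.1} ×ˢ {y | F u.2 y} := by
    ext w
    simp [prodE, eq_comm]
  have hdisj : Disjoint ({x | E u.1 x} ×ˢ {u.2}) ({u.1} ×ˢ {y | F u.2 y}) :=
    Set.disjoint_left.2 fun w hw hw' => hirr u.1 (hw'.1 ▸ hw.1 :)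
  rw [hunion, Set.ncard_union_eq hdisj, Set.ncard_prod, Set.ncard_prod, Set.ncard_singleton,
    Set.ncard_singleton, mul_one, one_mul]

lemma IsRegular.prodE [Finite V] [Finite W] {d₁ d₂ : ℕ} (hE : IsRegular E d₁)
    (hF : IsRegular F d₂) (hirr : ∀ v, ¬E v v) : IsRegular (prodE E F) (d₁ + d₂) := fun v => by
  have hin : {w | Collective.prodE E F w v} =
      {w | Collective.prodE (transpose E) (transpose F) v w} := by
    rw [← transpose_prodE]
    rfl
  rw [hin, ncard_prodE hirr, ncard_prodE (E := transpose E) hirr]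
  exact ⟨congr_arg₂ (· + ·) (hE v.1).1 (hF v.2).1, congr_arg₂ (· + ·) (hE v.1).2 (hF v.2).2⟩

/-- The routing of the product which sends the fraction `L` of a shard along the routing `f` of
the first factor, and the rest along the routing `g` of the second factor. -/
noncomputable def prodRouting (E : V → V → Prop) (F : W → W → Prop) (L : ℕ → ℕ → ℝ)
    (f : V → V → V → ℝ) (g : W → W → W → ℝ) (u v w : V × W) : ℝ :=
  open Classical in
  (if w.2 = u.2 then L (dist E u.1 v.1) (dist F u.2 v.2) * f u.1 v.1 w.1 else 0) +
    if w.1 = u.1 then (1 - L (dist E u.1 v.1) (dist F u.2 v.2)) * g u.2 v.2 w.2 else 0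

variable {d₁ d₂ : ℕ} {N₁ N₂ : ℕ → ℕ} {L : ℕ → ℕ → ℝ} {f : V → V → V → ℝ} {g : W → W → W → ℝ}

lemma prodRouting_left {u v : V × W} {w : V} (h : w ≠ u.1) :
    prodRouting E F L f g u v (w, u.2) =
      L (dist E u.1 v.1) (dist F u.2 v.2) * f u.1 v.1 w := by
  simp [prodRouting, h]

lemma prodRouting_right {u v : V × W} {w : W} (h : w ≠ u.2) :
    prodRouting E F L f g u v (u.1, w) =
      (1 - L (dist E u.1 v.1) (dist F u.2 v.2)) * g u.2 v.2 w := by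
  simp [prodRouting, h]

variable [Fintype V] [Fintype W]

lemma sum_sphere_prodE (hE : StronglyConnected E) (hF : StronglyConnected F) {M : Type*}
    [AddCommMonoid M] (φ : V × W → M) (u : V × W) (s : ℕ) :
    ∑ v ∈ sphere (prodE E F) u s, φ v =
      ∑ p ∈ antidiagonal s, ∑ x ∈ sphere E u.1 p.1, ∑ y ∈ sphere F u.2 p.2, φ (x, y) := by
  rw [← sum_fiberwise_of_maps_to (t := antidiagonal s)
    (g := fun v => (dist E u.1 v.1, dist F u.2 v.2))]
  · refine sum_congr rfl fun p hp => ?_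
    rw [← sum_product']
    refine sum_congr (ext fun v => ?_) fun _ _ => rfl
    rw [HasAntidiagonal.mem_antidiagonal] at hp
    simp only [mem_filter, mem_product, mem_sphere, dist_prodE hE hF, Prod.ext_iff]
    omega
  · intro v hv
    rw [mem_sphere, dist_prodE hE hF] at hv
    exact HasAntidiagonal.mem_antidiagonal.2 hv

lemma sum_prodRouting (u v : V × W) :
    ∑ w, prodRouting E F L f g u v w =
      L (dist E u.1 v.1) (dist F u.2 v.2) * ∑ x, f u.1 v.1 x +
        (1 - L (dist E u.1 v.1) (dist F u.2 v.2)) * ∑ y, g u.2 v.2 y := by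
  classical
  simp only [prodRouting, sum_add_distrib, mul_sum]
  congr 1
  · simp [Fintype.sum_prod_type]
  · simp [Fintype.sum_prod_type_right]

lemma sum_sphere_prodRouting_left {u : V × W} {w : V} (h : w ≠ u.1) (a b : ℕ) :
    ∑ x ∈ sphere E u.1 a, ∑ y ∈ sphere F u.2 b, prodRouting E F L f g u (x, y) (w, u.2) =
      L a b * ((∑ x ∈ sphere E u.1 a, f u.1 x w) * #(sphere F u.2 b)) := by
  rw [sum_mul, mul_sum]
  refine sum_congr rfl fun x hx => ?_
  have hterm : ∀ y ∈ sphere F u.2 b,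
      prodRouting E F L f g u (x, y) (w, u.2) = L a b * f u.1 x w := fun y hy => by
    rw [prodRouting_left h, mem_sphere.1 hx, mem_sphere.1 hy]
  rw [sum_congr rfl hterm, sum_const, nsmul_eq_mul', mul_assoc]

lemma sum_sphere_prodRouting_right {u : V × W} {w : W} (h : w ≠ u.2) (a b : ℕ) :
    ∑ x ∈ sphere E u.1 a, ∑ y ∈ sphere F u.2 b, prodRouting E F L f g u (x, y) (u.1, w) =
      (1 - L a b) * (#(sphere E u.1 a) * ∑ y ∈ sphere F u.2 b, g u.2 y w) := by
  have hterm : ∀ x ∈ sphere E u.1 a, ∑ y ∈ sphere F u.2 b,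
      prodRouting E F L f g u (x, y) (u.1, w) =
        (1 - L a b) * ∑ y ∈ sphere F u.2 b, g u.2 y w := fun x hx => by
    rw [mul_sum]
    refine sum_congr rfl fun y hy => ?_
    rw [prodRouting_right h, mem_sphere.1 hx, mem_sphere.1 hy]
  rw [sum_congr rfl hterm, sum_const, nsmul_eq_mul, mul_left_comm]

lemma IsRouting.prodRouting (hE : StronglyConnected E) (hF : StronglyConnected F)
    (hL : IsBalancedSplit d₁ d₂ N₁ N₂ L) (hf : IsRouting E f) (hg : IsRouting F g) :
    IsRouting (prodE E F) (prodRouting E F L f g) where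
  nonneg u v w := by
    have := hL.nonneg (dist E u.1 v.1) (dist F u.2 v.2)
    have := sub_nonneg.2 (hL.le_one (dist E u.1 v.1) (dist F u.2 v.2))
    have := hf.nonneg u.1 v.1 w.1
    have := hg.nonneg u.2 v.2 w.2
    unfold Collective.prodRouting
    positivity
  support {u v w} h := by
    rw [dist_prodE hE hF, dist_prodE hE hF]
    have hfg : w.2 = u.2 ∧ f u.1 v.1 w.1 ≠ 0 ∨ w.1 = u.1 ∧ g u.2 v.2 w.2 ≠ 0 := by
      classical
      contrapose! h
      rw [Collective.prodRouting, ite_eq_right_iff.2 fun h₂ => by rw [h.1 h₂, mul_zero],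
        ite_eq_right_iff.2 fun h₁ => by rw [h.2 h₁, mul_zero], add_zero]
    obtain ⟨h₂, h⟩ | ⟨h₁, h⟩ := hfg
    · exact ⟨Or.inl ⟨(hf.support h).1, h₂.symm⟩, by rw [(hf.support h).2, h₂]; omega⟩
    · exact ⟨Or.inr ⟨h₁.symm, (hg.support h).1⟩, by rw [(hg.support h).2, h₁]; omega⟩
  sum_eq_one {u v} h := by
    rw [sum_prodRouting]
    by_cases h₁ : u.1 = v.1
    · have h₂ : u.2 ≠ v.2 := fun h₂ => h (Prod.ext h₁ h₂)
      rw [h₁, dist_self, hL.zero_left (mt hF.dist_eq_zero.1 h₂), hg.sum_eq_one h₂]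
      ring
    by_cases h₂ : u.2 = v.2
    · rw [h₂, dist_self, hL.zero_right (mt hE.dist_eq_zero.1 h₁), hf.sum_eq_one h₁]
      ring
    · rw [hf.sum_eq_one h₁, hg.sum_eq_one h₂]
      ring

lemma IsBalancedRouting.prodRouting (hE : IsBalanced E d₁) (hF : IsBalanced F d₂)
    (hL : IsBalancedSplit d₁ d₂ N₁ N₂ L) (hf : IsBalancedRouting E d₁ N₁ f)
    (hg : IsBalancedRouting F d₂ N₂ g) :
    IsBalancedRouting (prodE E F) (d₁ + d₂) (fun s => ∑ p ∈ antidiagonal s, N₁ p.1 * N₂ p.2)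
      (prodRouting E F L f g) where
  toIsRouting := hf.toIsRouting.prodRouting hE.stronglyConnected hF.stronglyConnected hL
    hg.toIsRouting
  card_sphere u s := by
    rw [card_eq_sum_ones, sum_sphere_prodE hE.stronglyConnected hF.stronglyConnected]
    simp [hf.card_sphere, hg.card_sphere]
  load_eq {u w s} huw hs := by
    rw [sum_sphere_prodE hE.stronglyConnected hF.stronglyConnected]
    push_cast
    obtain ⟨w₁, w₂⟩ := w
    obtain ⟨h, rfl⟩ | ⟨rfl, h⟩ := huw
    · have hne : w₁ ≠ u.1 := by rintro rfl; exact hE.irrefl _ h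
      rw [← hL.sum_mul_left (hE.isRegular.pos h).ne'
        (fun a ha => hf.load_eq h (Nat.one_le_iff_ne_zero.2 ha)) (Nat.one_le_iff_ne_zero.1 hs)]
      simp only [sum_sphere_prodRouting_left hne, hg.card_sphere]
    · have hne : w₂ ≠ u.2 := by rintro rfl; exact hF.irrefl _ h
      rw [← hL.sum_mul_right (hF.isRegular.pos h).ne'
        (fun b hb => hg.load_eq h (Nat.one_le_iff_ne_zero.2 hb)) (Nat.one_le_iff_ne_zero.1 hs)]
      simp only [sum_sphere_prodRouting_right hne, hf.card_sphere]

lemma IsBalanced.prodE [Nonempty V] [Nonempty W] (hE : IsBalanced E d₁) (hF : IsBalanced F d₂) :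
    IsBalanced (prodE E F) (d₁ + d₂) where
  irrefl v h := h.elim (fun h => hE.irrefl _ h.1) fun h => hF.irrefl _ h.2
  stronglyConnected := hE.stronglyConnected.prodE hF.stronglyConnected
  isRegular := hE.isRegular.prodE hF.isRegular hE.irrefl
  exists_routing := by
    obtain ⟨N₁, f, hf⟩ := hE.exists_routing
    obtain ⟨N₂, g, hg⟩ := hF.exists_routing
    have hN₁ := hf.isSphereGrowth hE.irrefl hE.stronglyConnected hE.isRegular
    have hN₂ := hg.isSphereGrowth hF.irrefl hF.stronglyConnected hF.isRegular
    obtain ⟨L, hL⟩ := hN₁.exists_isBalancedSplit hN₂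
    exact ⟨_, _, hf.prodRouting hE hF hL hg⟩

end Product

section Box

lemma isBalanced_of_unique {V : Type*} [Fintype V] [Unique V] {E : V → V → Prop}
    (hE : ∀ u v, ¬E u v) : IsBalanced E 0 where
  irrefl v := hE v v
  stronglyConnected u v := ⟨0, hasWalk_zero.2 (Subsingleton.elim u v)⟩
  isRegular v := by simp [hE]
  exists_routing := by
    refine ⟨fun s => #(sphere E default s), 0, ⟨⟨fun _ _ _ => le_rfl, fun h => absurd rfl h,
      fun h => absurd (Subsingleton.elim _ _) h⟩, fun u s => ?_, fun h => absurd h (hE _ _)⟩⟩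
    rw [Subsingleton.elim u default]

/-- Splitting off the first factor of a Cartesian product. -/
def boxConsIso {n : ℕ} {V : Fin (n + 1) → Type*} (E : ∀ i, V i → V i → Prop) :
    prodE (E 0) (boxE fun i : Fin n => E i.succ) ≃r boxE E where
  toEquiv := Fin.consEquiv V
  map_rel_iff' {u w} := by
    obtain ⟨u, u'⟩ := u
    obtain ⟨w, w'⟩ := w
    simp [prodE, boxE, Fin.exists_fin_succ, Fin.forall_fin_succ, funext_iff,
      (Fin.succ_ne_zero _).symm, ← exists_and_left, and_left_comm]

lemma IsBalanced.boxE {n : ℕ} {V : Fin n → Type*} [∀ i, Fintype (V i)] [∀ i, Nonempty (V i)]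
    {E : ∀ i, V i → V i → Prop} {d : Fin n → ℕ} (h : ∀ i, IsBalanced (E i) (d i)) :
    IsBalanced (boxE E) (∑ i, d i) := by
  induction n with
  | zero => exact isBalanced_of_unique fun u v ⟨j, _⟩ => j.elim0
  | succ n ih =>
    rw [Fin.sum_univ_succ]
    exact ((h 0).prodE (ih fun i => h i.succ)).relIso (boxConsIso E)

end Box

section Finsum

variable {α β M : Type*} [AddCommMonoid M]

lemma finsum_mem_eq_sum_fiberwise {s : Set α} (hs : s.Finite) {t : Finset β} {g : α → β}
    (h : ∀ a ∈ s, g a ∈ t) (f : α → M) :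
    ∑ᶠ a ∈ s, f a = ∑ b ∈ t, ∑ᶠ a ∈ {a | a ∈ s ∧ g a = b}, f a := by
  classical
  rw [finsum_mem_eq_finite_toFinset_sum f hs,
    ← sum_fiberwise_of_maps_to (g := g) fun a ha => h a (hs.mem_toFinset.1 ha)]
  refine sum_congr rfl fun b _ => ?_
  rw [← finsum_mem_coe_finset, coe_filter]
  simp only [hs.mem_toFinset]

end Finsum

section Loads

variable {V : Type*} {E : V → V → Prop} {A : Sched V} {u v w : V} {t : ℕ}

/-- The fraction of the shard destined for `v` that `u` forwards to `w` under the schedule `A`,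
summed over all steps. -/
noncomputable def schedRouting (A : Sched V) (u v w : V) : ℝ :=
  ∑ᶠ p ∈ {p : Tup V | p ∈ A ∧ p.1 = v ∧ p.2.2.1 = (u, w)}, (volume p.2.1).toReal

/-- The load of the busiest edge at step `t`. -/
noncomputable def maxLoad (E : V → V → Prop) (A : Sched V) (t : ℕ) : ℝ :=
  sSup ((fun e => edgeLoad A e t) '' {e : V × V | E e.1 e.2})

/-- The schedule `A` on the `d`-regular digraph `E` is bandwidth optimal. -/
def IsBandwidthOptimal (E : V → V → Prop) (d : ℕ) (M B : ℝ) (A : Sched V) : Prop :=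
  bwT E d M B A = (M / B) * (((Nat.card V : ℝ) - 1) / (Nat.card V : ℝ))

lemma schedRouting_nonneg (A : Sched V) (u v w : V) : 0 ≤ schedRouting A u v w :=
  finsum_nonneg fun _ => finsum_nonneg fun _ => ENNReal.toReal_nonneg

lemma IsShortestPathSched.support_schedRouting (hsp : IsShortestPathSched E A) (hA : IsSched E A)
    (h : schedRouting A u v w ≠ 0) : E u w ∧ dist E u v = dist E w v + 1 := by
  obtain ⟨⟨_, C, _, t⟩, ⟨hp, rfl, rfl⟩, -⟩ := exists_ne_zero_of_finsum_mem_ne_zero h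
  exact ⟨(hA.2 _ hp).1, (hsp.1 _ _ _ _ _ hp).1⟩

lemma edgeLoad_le_maxLoad [Finite V] (h : E u w) (t : ℕ) : edgeLoad A (u, w) t ≤ maxLoad E A t :=
  le_csSup (Set.toFinite _).bddAbove ⟨(u, w), h, rfl⟩

lemma maxLoad_eq_of_forall_edgeLoad_eq {c : ℝ} (huw : E u w)
    (h : ∀ u w, E u w → edgeLoad A (u, w) t = c) : maxLoad E A t = c := by
  have himage : (fun e => edgeLoad A e t) '' {e : V × V | E e.1 e.2} = {c} :=
    Set.eq_singleton_iff_unique_mem.2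
      ⟨⟨(u, w), huw, h u w huw⟩, by rintro _ ⟨e, he, rfl⟩; exact h e.1 e.2 he⟩
  rw [maxLoad, himage, csSup_singleton]

lemma IsShortestPathSched.tmax_eq_diam [Finite V] (hsp : IsShortestPathSched E A)
    (hsc : StronglyConnected E) : tmax A = diam E := by
  have hle : diam E ∈ upperBounds {t | ∃ p ∈ A, p.2.2.2 = t} := by
    rintro _ ⟨⟨v, C, ⟨u, w⟩, t⟩, hp, rfl⟩
    have := hsp.1 _ _ _ _ _ hp
    dsimp only
    omega
  refine le_antisymm (csSup_le' hle) ?_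
  obtain h | h := Nat.eq_zero_or_pos (diam E)
  · exact h ▸ Nat.zero_le _
  · obtain ⟨u, w, huw, hne⟩ := hsc.exists_adj_of_diam_pos h
    have hdist : dist E u w = 1 := hsc.dist_eq_one.2 ⟨huw, hne⟩
    obtain ⟨C, hC⟩ := hsp.2 w u w (diam E) huw (by rw [hdist, dist_self])
      (by rw [hdist, add_comm])
    exact le_csSup ⟨_, hle⟩ ⟨_, hC, rfl⟩

lemma IsReduceScatter.exists_first_hop (hrs : IsReduceScatter A) (huv : u ≠ v) {x : ℝ}
    (hx : x ∈ shard) : ∃ C w t, (v, C, (u, w), t) ∈ A ∧ x ∈ C := by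
  obtain ⟨m, w, C, t, h₀, hm, -, h⟩ := hrs u v huv x hx
  cases m with
  | zero => exact absurd (h₀.symm.trans hm) huv
  | succ m =>
    have := h 0
    rw [Fin.castSucc_zero, h₀] at this
    exact ⟨_, _, _, this⟩

variable [Fintype V]

lemma IsShortestPathSched.edgeLoad_eq_sum_sphere (hsp : IsShortestPathSched E A)
    (hA : IsSched E A) (u w : V) (t : ℕ) :
    edgeLoad A (u, w) t = ∑ v ∈ sphere E u (diam E + 1 - t), schedRouting A u v w := by
  rw [edgeLoad, finsum_mem_eq_sum_fiberwise (hA.1.subset fun p hp => hp.1) (g := Prod.fst)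
    (t := sphere E u (diam E + 1 - t))]
  · refine sum_congr rfl fun v hv => ?_
    rw [mem_sphere] at hv
    refine finsum_mem_congr (Set.ext fun p => ?_) fun _ _ => rfl
    constructor
    · rintro ⟨⟨hp, hedge, -⟩, hdest⟩
      exact ⟨hp, hdest, hedge⟩
    · obtain ⟨_, C, _, t'⟩ := p
      rintro ⟨hp, rfl, rfl⟩
      have := hsp.1 _ _ _ _ _ hp
      refine ⟨⟨hp, rfl, ?_⟩, rfl⟩
      dsimp only at *
      omega
  · rintro ⟨v, C, _, _⟩ ⟨hp, rfl, rfl⟩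
    have := (hsp.1 _ _ _ _ _ hp).2
    rw [mem_sphere]
    dsimp only
    omega

lemma IsReduceScatter.one_le_sum_schedRouting (hrs : IsReduceScatter A) (hA : IsSched E A)
    (huv : u ≠ v) : 1 ≤ ∑ w, schedRouting A u v w := by
  have hfin : {p : Tup V | p ∈ A ∧ p.1 = v ∧ p.2.2.1.1 = u}.Finite := hA.1.subset fun p hp => hp.1
  have hsum : ∑ w, schedRouting A u v w = ∑ p ∈ hfin.toFinset, volume.real p.2.1 := by
    rw [← finsum_mem_eq_finite_toFinset_sum, finsum_mem_eq_sum_fiberwise hfin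
      (g := fun p => p.2.2.1.2) fun p _ => mem_univ _]
    simp only [schedRouting, Prod.ext_iff, Set.mem_ofPred_eq, and_assoc, Measure.real]
  have hcover : shard ⊆ ⋃ p ∈ hfin.toFinset, p.2.1 := fun x hx => by
    obtain ⟨C, w, t, hp, hxC⟩ := hrs.exists_first_hop huv hx
    exact Set.mem_biUnion (hfin.mem_toFinset.2 ⟨hp, rfl, rfl⟩) hxC
  have hsub : ⋃ p ∈ hfin.toFinset, p.2.1 ⊆ shard :=
    Set.iUnion₂_subset fun p hp => (hA.2 p (hfin.mem_toFinset.1 hp).1).2.1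
  calc 1 = volume.real (⋃ p ∈ hfin.toFinset, p.2.1) := by
        rw [hsub.antisymm hcover]; simp [shard]
    _ ≤ ∑ p ∈ hfin.toFinset, volume.real p.2.1 := measureReal_biUnion_finset_le _ _
    _ = ∑ w, schedRouting A u v w := hsum.symm

lemma IsShortestPathSched.sum_edgeLoad (hsp : IsShortestPathSched E A) (hA : IsSched E A)
    (u : V) (t : ℕ) : ∑ w ∈ outNeighbors E u, edgeLoad A (u, w) t =
      ∑ v ∈ sphere E u (diam E + 1 - t), ∑ w, schedRouting A u v w := by
  simp only [hsp.edgeLoad_eq_sum_sphere hA]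
  rw [sum_comm]
  refine sum_congr rfl fun v _ => sum_subset (subset_univ _) fun w _ hw => ?_
  by_contra h
  exact hw (mem_outNeighbors.2 (hsp.support_schedRouting hA h).1)

lemma one_le_sum_schedRouting_of_mem_sphere (hrs : IsReduceScatter A) (hA : IsSched E A)
    (ht : t ≤ diam E) : ∀ v ∈ sphere E u (diam E + 1 - t), 1 ≤ ∑ w, schedRouting A u v w := by
  intro v hv
  refine hrs.one_le_sum_schedRouting hA ?_
  rintro rfl
  rw [mem_sphere, dist_self] at hv
  omega

lemma card_sphere_le_sum_edgeLoad (hrs : IsReduceScatter A) (hsp : IsShortestPathSched E A)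
    (hA : IsSched E A) (u : V) (ht : t ≤ diam E) :
    #(sphere E u (diam E + 1 - t)) ≤ ∑ w ∈ outNeighbors E u, edgeLoad A (u, w) t := by
  rw [hsp.sum_edgeLoad hA]
  simpa using card_nsmul_le_sum _ _ 1 (one_le_sum_schedRouting_of_mem_sphere hrs hA ht)

lemma IsRegular.sum_edgeLoad_le {d : ℕ} (hreg : IsRegular E d) (A : Sched V) (u : V) (t : ℕ) :
    ∑ w ∈ outNeighbors E u, edgeLoad A (u, w) t ≤ d * maxLoad E A t := by
  rw [← nsmul_eq_mul, ← hreg.card_outNeighbors u]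
  exact sum_le_card_nsmul _ _ _ fun w hw => edgeLoad_le_maxLoad (mem_outNeighbors.1 hw) t

end Loads

section Extraction

variable {V : Type*} [Fintype V] {E : V → V → Prop} {d : ℕ} {M B : ℝ} {A : Sched V} {u v w : V}

lemma isBandwidthOptimal_iff (hM : M ≠ 0) (hB : B ≠ 0) (hsc : StronglyConnected E)
    (hsp : IsShortestPathSched E A) (u : V) :
    IsBandwidthOptimal E d M B A ↔
      ∑ t ∈ Icc 1 (diam E), (#(sphere E u (diam E + 1 - t)) : ℝ) =
        ∑ t ∈ Icc 1 (diam E), d * maxLoad E A t := by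
  have : Nonempty V := ⟨u⟩
  have hcard : ∑ t ∈ Icc 1 (diam E), (#(sphere E u (diam E + 1 - t)) : ℝ) = Nat.card V - 1 := by
    rw [← Nat.cast_sum, hsc.sum_card_sphere u, Nat.cast_pred Fintype.card_pos,
      Nat.card_eq_fintype_card]
  have hbwT : bwT E d M B A =
      M / B / Nat.card V * ∑ t ∈ Icc 1 (diam E), d * maxLoad E A t := by
    rw [bwT, hsp.tmax_eq_diam hsc, mul_sum]
    refine sum_congr rfl fun t _ => ?_
    rw [stepT, maxLoad]
    ring
  have hne : M / B / Nat.card V ≠ 0 :=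
    div_ne_zero (div_ne_zero hM hB) (Nat.cast_ne_zero.2 Nat.card_pos.ne')
  rw [IsBandwidthOptimal, hbwT, hcard, ← mul_div_assoc, mul_div_right_comm, mul_right_inj' hne,
    eq_comm]

/-- A bandwidth optimal shortest-path reduce-scatter schedule on the `d`-regular digraph `E`. -/
structure IsOptimalSched (E : V → V → Prop) (d : ℕ) (M B : ℝ) (A : Sched V) : Prop where
  isSched : IsSched E A
  isReduceScatter : IsReduceScatter A
  isShortestPathSched : IsShortestPathSched E A
  isBandwidthOptimal : IsBandwidthOptimal E d M B A

section Optimal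

variable (hA : IsOptimalSched E d M B A) (hM : M ≠ 0) (hB : B ≠ 0) (hsc : StronglyConnected E)
  (hreg : IsRegular E d) {t : ℕ} (ht : t ∈ Icc 1 (diam E))
include hA hM hB hsc hreg ht

lemma IsOptimalSched.card_sphere (u : V) :
    #(sphere E u (diam E + 1 - t)) = d * maxLoad E A t := by
  have hle : ∀ t ∈ Icc 1 (diam E),
      (#(sphere E u (diam E + 1 - t)) : ℝ) ≤ d * maxLoad E A t := fun t ht =>
    (card_sphere_le_sum_edgeLoad hA.isReduceScatter hA.isShortestPathSched hA.isSched u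
      (mem_Icc.1 ht).2).trans (hreg.sum_edgeLoad_le A u t)
  exact (sum_eq_sum_iff_of_le hle).1 ((isBandwidthOptimal_iff hM hB hsc
    hA.isShortestPathSched u).1 hA.isBandwidthOptimal) t ht

lemma IsOptimalSched.sum_edgeLoad (u : V) :
    ∑ w ∈ outNeighbors E u, edgeLoad A (u, w) t = d * maxLoad E A t := by
  refine (hreg.sum_edgeLoad_le A u t).antisymm ?_
  rw [← hA.card_sphere hM hB hsc hreg ht u]
  exact card_sphere_le_sum_edgeLoad hA.isReduceScatter hA.isShortestPathSched hA.isSched u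
    (mem_Icc.1 ht).2

omit [Fintype V] in
lemma IsOptimalSched.edgeLoad_eq [Finite V] (huw : E u w) :
    edgeLoad A (u, w) t = maxLoad E A t := by
  cases nonempty_fintype V
  refine (sum_eq_sum_iff_of_le fun w hw => edgeLoad_le_maxLoad (mem_outNeighbors.1 hw) t).1 ?_ w
    (mem_outNeighbors.2 huw)
  rw [hA.sum_edgeLoad hM hB hsc hreg ht, sum_const, hreg.card_outNeighbors, nsmul_eq_mul]

lemma IsOptimalSched.sum_schedRouting (hv : v ∈ sphere E u (diam E + 1 - t)) :
    ∑ w, schedRouting A u v w = 1 := by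
  refine ((sum_eq_sum_iff_of_le (one_le_sum_schedRouting_of_mem_sphere hA.isReduceScatter
    hA.isSched (mem_Icc.1 ht).2)).1 ?_ v hv).symm
  rw [← hA.isShortestPathSched.sum_edgeLoad hA.isSched, hA.sum_edgeLoad hM hB hsc hreg ht,
    ← hA.card_sphere hM hB hsc hreg ht u, sum_const, nsmul_one]

end Optimal

lemma IsOptimalSched.isBalancedRouting (hA : IsOptimalSched E d M B A) (hM : M ≠ 0) (hB : B ≠ 0)
    (hsc : StronglyConnected E) (hreg : IsRegular E d) (u₀ : V) :
    IsBalancedRouting E d (fun s => #(sphere E u₀ s)) (schedRouting A) := by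
  have hstep {s : ℕ} (h₁ : 1 ≤ s) (h₂ : s ≤ diam E) :
      diam E + 1 - s ∈ Icc 1 (diam E) ∧ diam E + 1 - (diam E + 1 - s) = s := by
    rw [mem_Icc]
    omega
  have hcard (u : V) (s : ℕ) : #(sphere E u s) = #(sphere E u₀ s) := by
    obtain rfl | h₁ := Nat.eq_zero_or_pos s
    · simp only [hsc.sphere_zero, card_singleton]
    obtain h₂ | h₂ := lt_or_ge (diam E) s
    · simp only [sphere_eq_empty h₂]
    obtain ⟨ht, hs⟩ := hstep h₁ h₂
    have := (hA.card_sphere hM hB hsc hreg ht u).trans (hA.card_sphere hM hB hsc hreg ht u₀).symm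
    rwa [hs, Nat.cast_inj] at this
  refine ⟨⟨schedRouting_nonneg A,
    fun h => hA.isShortestPathSched.support_schedRouting hA.isSched h, fun {u v} huv => ?_⟩,
    hcard, fun {u w s} huw h₁ => ?_⟩
  · have h₁ : 1 ≤ dist E u v := Nat.one_le_iff_ne_zero.2 (mt hsc.dist_eq_zero.1 huv)
    obtain ⟨ht, hs⟩ := hstep h₁ (dist_le_diam u v)
    exact hA.sum_schedRouting hM hB hsc hreg ht (mem_sphere.2 hs.symm)
  · obtain h₂ | h₂ := lt_or_ge (diam E) s
    · simp only [sphere_eq_empty h₂, sum_empty, mul_zero, card_empty, Nat.cast_zero]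
    obtain ⟨ht, hs⟩ := hstep h₁ h₂
    have hload := hA.isShortestPathSched.edgeLoad_eq_sum_sphere hA.isSched u w (diam E + 1 - s)
    have hsphere := hA.card_sphere hM hB hsc hreg ht u₀
    rw [hs] at hload hsphere
    rw [← hload, hA.edgeLoad_eq hM hB hsc hreg ht huw, hsphere]

lemma IsOptimalSched.isBalanced [Nonempty V] (hA : IsOptimalSched E d M B A) (hM : M ≠ 0)
    (hB : B ≠ 0) (hirr : ∀ v, ¬E v v) (hsc : StronglyConnected E) (hreg : IsRegular E d) :
    IsBalanced E d :=
  ⟨hirr, hsc, hreg, _, _, hA.isBalancedRouting hM hB hsc hreg (Classical.arbitrary V)⟩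

end Extraction

section Construction

lemma exists_Ico_cover {ι : Type*} (s : Finset ι) {g : ι → ℝ} (hg : ∀ i, 0 ≤ g i) :
    ∃ a : ι → ℝ, (∀ i ∈ s, Set.Ico (a i) (a i + g i) ⊆ Set.Ico 0 (∑ i ∈ s, g i)) ∧
      Set.Ico 0 (∑ i ∈ s, g i) ⊆ ⋃ i ∈ s, Set.Ico (a i) (a i + g i) := by
  classical
  induction s using Finset.induction_on with
  | empty => exact ⟨0, by simp, by simp⟩
  | insert j s hj ih =>
    obtain ⟨a, hsub, hcover⟩ := ih
    have hsum : 0 ≤ ∑ i ∈ s, g i := sum_nonneg fun i _ => hg i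
    have hne {i : ι} (hi : i ∈ s) : i ≠ j := ne_of_mem_of_not_mem hi hj
    rw [sum_insert hj, add_comm]
    refine ⟨Function.update a j (∑ i ∈ s, g i), fun i hi => ?_, fun x hx => ?_⟩
    · obtain rfl | hi := mem_insert.1 hi
      · rw [Function.update_self]
        exact Set.Ico_subset_Ico_left hsum
      · rw [Function.update_of_ne (hne hi)]
        exact (hsub i hi).trans (Set.Ico_subset_Ico_right (le_add_of_nonneg_right (hg j)))
    · rw [Set.mem_iUnion₂]
      obtain hlt | hle := lt_or_ge x (∑ i ∈ s, g i)
      · obtain ⟨i, hi, hxi⟩ := Set.mem_iUnion₂.1 (hcover ⟨hx.1, hlt⟩)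
        exact ⟨i, mem_insert_of_mem hi, by rwa [Function.update_of_ne (hne hi)]⟩
      · exact ⟨j, mem_insert_self j s, by rw [Function.update_self]; exact ⟨hle, hx.2⟩⟩

variable {V : Type*} {E : V → V → Prop} {f : V → V → V → ℝ} {C : V → V → V → Set ℝ}
  {u v w : V} {t : ℕ}

/-- The chunks `C u v w` of the shard destined for `v` realize the fractions `f u v w` that `u`
forwards to `w`. -/
structure IsChunking (f : V → V → V → ℝ) (C : V → V → V → Set ℝ) : Prop where
  measurableSet : ∀ u v w, MeasurableSet (C u v w)
  subset_shard : ∀ u v w, C u v w ⊆ shard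
  volume_eq : ∀ u v w, volume.real (C u v w) = f u v w
  ne_zero : ∀ {u v w x}, x ∈ C u v w → f u v w ≠ 0
  exists_mem : ∀ {u v x}, u ≠ v → x ∈ shard → ∃ w, x ∈ C u v w

lemma IsRouting.exists_isChunking [Fintype V] (hf : IsRouting E f) : ∃ C, IsChunking f C := by
  choose a hsub hcover using fun u v => exists_Ico_cover univ (hf.nonneg u v)
  have hle (u v : V) : ∑ w, f u v w ≤ 1 := by
    obtain rfl | huv := eq_or_ne u v
    · simp only [hf.apply_self, sum_const_zero, zero_le_one]
    · exact (hf.sum_eq_one huv).le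
  refine ⟨fun u v w => Set.Ico (a u v w) (a u v w + f u v w), fun _ _ _ => measurableSet_Ico,
    fun u v w => (hsub u v w (mem_univ w)).trans (Set.Ico_subset_Ico_right (hle u v)),
    fun u v w => ?_, fun hx h => ?_, fun {u v x} huv hx => ?_⟩
  · rw [Real.volume_real_Ico_of_le (le_add_of_nonneg_right (hf.nonneg u v w)),
      add_sub_cancel_left]
  · simp [h] at hx
  · have := hcover u v ((hf.sum_eq_one huv).symm ▸ hx : x ∈ Set.Ico 0 (∑ w, f u v w))
    simpa only [mem_univ, Set.iUnion_true, Set.mem_iUnion] using this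

/-- The shortest-path schedule in which `u` forwards the chunk `C u v w` of the shard destined for
`v` to each `w` next on a shortest path from `u` to `v`. -/
def chunkSched (E : V → V → Prop) (C : V → V → V → Set ℝ) : Sched V :=
  {p | ∃ v u w, E u w ∧ dist E u v = dist E w v + 1 ∧
    p = (v, C u v w, (u, w), diam E + 1 - dist E u v)}

lemma mem_chunkSched {c : Set ℝ} : (v, c, (u, w), t) ∈ chunkSched E C ↔
    E u w ∧ dist E u v = dist E w v + 1 ∧ c = C u v w ∧ t = diam E + 1 - dist E u v := by
  constructor
  · rintro ⟨_, _, _, h, hdist, heq⟩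
    cases heq
    exact ⟨h, hdist, rfl, rfl⟩
  · rintro ⟨h, hdist, rfl, rfl⟩
    exact ⟨v, u, w, h, hdist, rfl⟩

lemma isShortestPathSched_chunkSched [Finite V] (E : V → V → Prop) (C : V → V → V → Set ℝ) :
    IsShortestPathSched E (chunkSched E C) := by
  refine ⟨fun v c u w t h => ?_, fun v u w t h hdist ht =>
    ⟨C u v w, mem_chunkSched.2 ⟨h, hdist, rfl, by omega⟩⟩⟩
  obtain ⟨-, hdist, -, rfl⟩ := mem_chunkSched.1 h
  have := dist_le_diam (E := E) u v
  exact ⟨hdist, by omega⟩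

lemma IsChunking.isSched_chunkSched [Finite V] (hC : IsChunking f C) (E : V → V → Prop) :
    IsSched E (chunkSched E C) := by
  constructor
  · refine (Set.finite_range fun q : V × V × V =>
      ((q.1, C q.2.1 q.1 q.2.2, q.2, diam E + 1 - dist E q.2.1 q.1) : Tup V)).subset ?_
    rintro _ ⟨v, u, w, -, -, rfl⟩
    exact ⟨(v, u, w), rfl⟩
  · rintro _ ⟨v, u, w, h, -, rfl⟩
    have := dist_le_diam (E := E) u v
    exact ⟨h, hC.subset_shard u v w, hC.measurableSet u v w, by dsimp only; omega⟩

variable [Fintype V]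

lemma IsChunking.exists_hop (hC : IsChunking f C) (hf : IsRouting E f) (huv : u ≠ v) {x : ℝ}
    (hx : x ∈ shard) : ∃ w, dist E u v = dist E w v + 1 ∧
      (v, C u v w, (u, w), diam E + 1 - dist E u v) ∈ chunkSched E C ∧ x ∈ C u v w := by
  obtain ⟨w, hxw⟩ := hC.exists_mem huv hx
  obtain ⟨h, hdist⟩ := hf.support (hC.ne_zero hxw)
  exact ⟨w, hdist, mem_chunkSched.2 ⟨h, hdist, rfl, rfl⟩, hxw⟩

lemma IsChunking.exists_path (hC : IsChunking f C) (hf : IsRouting E f)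
    (hsc : StronglyConnected E) {x : ℝ} (hx : x ∈ shard) (v : V) (s : ℕ) :
    ∀ u, dist E u v = s → ∃ p : Fin (s + 1) → V, p 0 = u ∧ p (Fin.last s) = v ∧
      ∀ i : Fin s, ∃ c, (v, c, (p i.castSucc, p i.succ), diam E + 1 - s + i) ∈ chunkSched E C ∧
        x ∈ c := by
  induction s with
  | zero => exact fun u hu => ⟨fun _ => u, rfl, hsc.dist_eq_zero.1 hu, fun i => i.elim0⟩
  | succ s ih =>
    intro u hu
    have huv : u ≠ v := fun h => by simp [h] at hu
    obtain ⟨w, hdist, hmem, hxw⟩ := hC.exists_hop hf huv hx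
    obtain ⟨p, rfl, rfl, hp⟩ := ih w (by omega)
    refine ⟨Fin.cons u p, rfl, rfl, Fin.cases ⟨_, by rwa [hu] at hmem, hxw⟩ fun i => ?_⟩
    have hs := dist_le_diam (E := E) u (p (Fin.last s))
    have hstep : diam E + 1 - (s + 1) + (i.succ : ℕ) = diam E + 1 - s + i := by
      rw [Fin.val_succ]
      omega
    rw [hstep]
    exact hp i

lemma IsChunking.isReduceScatter_chunkSched (hC : IsChunking f C) (hf : IsRouting E f)
    (hsc : StronglyConnected E) : IsReduceScatter (chunkSched E C) := by
  intro u v _ x hx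
  obtain ⟨p, hp₀, hp₁, hp⟩ := hC.exists_path hf hsc hx v _ u rfl
  choose c hc using hp
  exact ⟨_, p, c, _, hp₀, hp₁, fun i j hij => Nat.add_lt_add_left hij _, hc⟩

lemma IsChunking.schedRouting_chunkSched (hC : IsChunking f C) (hf : IsRouting E f) :
    schedRouting (chunkSched E C) = f := by
  funext u v w
  have hset : {p : Tup V | p ∈ chunkSched E C ∧ p.1 = v ∧ p.2.2.1 = (u, w)} =
      {p | (E u w ∧ dist E u v = dist E w v + 1) ∧
        p = (v, C u v w, (u, w), diam E + 1 - dist E u v)} := by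
    ext ⟨v', c, e, t⟩
    constructor
    · rintro ⟨hp, rfl, rfl⟩
      obtain ⟨h, hdist, rfl, rfl⟩ := mem_chunkSched.1 hp
      exact ⟨⟨h, hdist⟩, rfl⟩
    · rintro ⟨⟨h, hdist⟩, heq⟩
      cases heq
      exact ⟨mem_chunkSched.2 ⟨h, hdist, rfl, rfl⟩, rfl, rfl⟩
  rw [schedRouting, hset]
  by_cases h : E u w ∧ dist E u v = dist E w v + 1
  · simp only [h, true_and, and_self, Set.ofPred_eq_eq_singleton, finsum_mem_singleton]
    exact hC.volume_eq u v w
  · simp only [h, false_and, Set.ofPred_false, finsum_mem_empty]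
    exact (not_not.1 (mt hf.support h)).symm

variable {d : ℕ} {N : ℕ → ℕ} {M B : ℝ}

lemma IsBalancedRouting.isBandwidthOptimal {A : Sched V} [Nonempty V]
    (hf : IsBalancedRouting E d N (schedRouting A)) (hsc : StronglyConnected E)
    (hreg : IsRegular E d) (hA : IsSched E A) (hsp : IsShortestPathSched E A) (hM : M ≠ 0)
    (hB : B ≠ 0) : IsBandwidthOptimal E d M B A := by
  rw [isBandwidthOptimal_iff hM hB hsc hsp (Classical.arbitrary V)]
  refine sum_congr rfl fun t ht => ?_
  rw [mem_Icc] at ht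
  obtain ⟨u₀, w₀, h₀, -⟩ := hsc.exists_adj_of_diam_pos (by omega)
  have hd : (d : ℝ) ≠ 0 := Nat.cast_ne_zero.2 (hreg.pos h₀).ne'
  have hload (u w : V) (h : E u w) : edgeLoad A (u, w) t = N (diam E + 1 - t) / d := by
    rw [eq_div_iff hd, mul_comm, hsp.edgeLoad_eq_sum_sphere hA, hf.load_eq h (by omega)]
  rw [maxLoad_eq_of_forall_edgeLoad_eq h₀ hload, mul_div_cancel₀ _ hd, hf.card_sphere]

lemma IsBalanced.exists_isOptimalSched [Nonempty V] (h : IsBalanced E d) (hM : M ≠ 0)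
    (hB : B ≠ 0) : ∃ A, IsOptimalSched E d M B A := by
  obtain ⟨N, f, hf⟩ := h.exists_routing
  obtain ⟨C, hC⟩ := hf.exists_isChunking
  have hrouting := hC.schedRouting_chunkSched hf.toIsRouting
  have hsched := hC.isSched_chunkSched E
  have hsp := isShortestPathSched_chunkSched E C
  exact ⟨chunkSched E C, hsched, hC.isReduceScatter_chunkSched hf.toIsRouting h.stronglyConnected,
    hsp, IsBalancedRouting.isBandwidthOptimal (hrouting.symm ▸ hf) h.stronglyConnected h.isRegular
      hsched hsp hM hB⟩

end Construction

/-- if each nontrivial simple strongly connected `d_i`-regular digraph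
`G_i` admits a bandwidth optimal shortest-path reduce-scatter schedule, then the
Cartesian product `G₁□⋯□G_n`, which is `(d₁+⋯+d_n)`-regular, admits a bandwidth optimal
shortest-path reduce-scatter schedule. -/
theorem cartesian_product_bw_optimal {n : ℕ} (hn : 1 ≤ n)
    (V : Fin n → Type) [∀ i, Finite (V i)]
    (E : ∀ i, V i → V i → Prop) (d : Fin n → ℕ)
    (hnontriv : ∀ i, 2 ≤ Nat.card (V i))
    (hsimple : ∀ i, ∀ v : V i, ¬ E i v v)
    (hsc : ∀ i, StronglyConnected (E i))
    (hreg : ∀ i, IsRegular (E i) (d i))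
    (M B : ℝ) (hM : 0 < M) (hB : 0 < B)
    (hopt : ∀ i, ∃ A : Sched (V i), IsSched (E i) A ∧ IsReduceScatter A ∧
      IsShortestPathSched (E i) A ∧
      bwT (E i) (d i) M B A
        = (M / B) * (((Nat.card (V i) : ℝ) - 1) / (Nat.card (V i) : ℝ))) :
    IsRegular (boxE E) (∑ i, d i) ∧
    ∃ A : Sched (∀ i, V i), IsSched (boxE E) A ∧ IsReduceScatter A ∧
      IsShortestPathSched (boxE E) A ∧
      bwT (boxE E) (∑ i, d i) M B A
        = (M / B) * (((Nat.card (∀ i, V i) : ℝ) - 1) / (Nat.card (∀ i, V i) : ℝ)) := by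
  let : ∀ i, Fintype (V i) := fun i => Fintype.ofFinite (V i)
  have : ∀ i, Nonempty (V i) := fun i =>
    Finite.card_pos_iff.1 (two_pos.trans_le (hnontriv i))
  have hfactor (i : Fin n) : IsBalanced (E i) (d i) := by
    obtain ⟨A, hsched, hrs, hsp, hbw⟩ := hopt i
    exact IsOptimalSched.isBalanced ⟨hsched, hrs, hsp, hbw⟩ hM.ne' hB.ne' (hsimple i) (hsc i)
      (hreg i)
  have hbox : IsBalanced (boxE E) (∑ i, d i) := IsBalanced.boxE hfactor
  obtain ⟨A, hA⟩ := hbox.exists_isOptimalSched hM.ne' hB.ne'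
  exact ⟨hbox.isRegular, A, hA.isSched, hA.isReduceScatter, hA.isShortestPathSched,
    hA.isBandwidthOptimal⟩

end Collective
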